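/- Let x_1, …, x_n and y_1, …, y_n be bit sequences and let a_1, …, a_{n−1} and d_1, …, d_n be the bits defined by the lexicographic comparison circuit. Then for every i with 1 ≤ i ≤ n, d_i = 1 if and only if (x_1, …, x_i) ≤lex (y_1, …, y_i); and for every i with 1 ≤ i ≤ n−1, d_i = 1 and a_i = 1 hold simultaneously if and only if (x_1, …, x_i) = (y_1, …, y_i). -/

import Mathlib

/-- The `a`-bits of the lexicographic comparison circuit (0-indexed):
`a_1 = [x_1 ≥ y_1]` and `a_{i+1} = a_i ∧ [x_{i+1} ≥ y_{i+1}]`, where for bits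
`[x ≥ y]` is the Boolean `¬y ∨ x`. -/
def lexA (x y : ℕ → Bool) : ℕ → Bool
  | 0 => !(y 0) || x 0
  | i + 1 => lexA x y i && (!(y (i + 1)) || x (i + 1))

/-- The `d`-bits of the lexicographic comparison circuit (0-indexed):
`d_1 = [y_1 ≥ x_1]` and `d_{i+1} = d_i ∧ (¬a_i ∨ [y_{i+1} ≥ x_{i+1}])`. -/
def lexD (x y : ℕ → Bool) : ℕ → Bool
  | 0 => !(x 0) || y 0
  | i + 1 => lexD x y i && (!(lexA x y i) || (!(x (i + 1)) || y (i + 1)))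

/-- Lexicographic order on bit sequences of length `n` (0-indexed): either the
sequences are equal, or at the smallest index where they differ the first
sequence has `0` and the second has `1`. -/
def lexLe (n : ℕ) (x y : ℕ → Bool) : Prop :=
  (∀ i < n, x i = y i) ∨
  ∃ i < n, (∀ j < i, x j = y j) ∧ x i = false ∧ y i = true

/-!
On the prefixes on which `d = 1`, that is, on which `x ≤lex y`, the bit `a` detects equality:
`a = 1` says that `y ≤ x` coordinatewise, which excludes a first difference with `x = 0` and
`y = 1`. Hence the clause `¬a_i ∨ [y_{i+1} ≥ x_{i+1}]` imposes `x_{i+1} ≤ y_{i+1}` exactly when the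
first `i` bits agree, and this is how the lexicographic order extends from length `i` to `i + 1`.
-/

theorem not_or_eq_true_iff_le : ∀ {a b : Bool}, (!a || b) = true ↔ a ≤ b := by
  decide

section

variable {x y : ℕ → Bool}

theorem lexLe_zero : lexLe 0 x y :=
  Or.inl fun _ hj => absurd hj (Nat.not_lt_zero _)

theorem lexLe_succ_iff {n : ℕ} :
    lexLe (n + 1) x y ↔ lexLe n x y ∧ ((∀ j < n, x j = y j) → x n ≤ y n) := by
  constructor
  · rintro (heq | ⟨i, hi, heq, hx, hy⟩)
    · exact ⟨Or.inl fun j hj => heq j (hj.trans n.lt_succ_self),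
        fun _ => (heq n n.lt_succ_self).le⟩
    · rcases Nat.lt_succ_iff_lt_or_eq.mp hi with hin | rfl
      · have hne : x i ≠ y i := by simp [hx, hy]
        exact ⟨Or.inr ⟨i, hin, heq, hx, hy⟩, fun hprefix => absurd (hprefix i hin) hne⟩
      · exact ⟨Or.inl heq, fun _ => hx ▸ Bool.false_le _⟩
  · rintro ⟨heq | ⟨i, hi, hfirst⟩, hle⟩
    · rcases (hle heq).lt_or_eq with hlt | hn
      · exact Or.inr ⟨n, n.lt_succ_self, heq, Bool.lt_iff.mp hlt⟩
      · exact Or.inl (Nat.forall_lt_succ_right.mpr ⟨heq, hn⟩)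
    · exact Or.inr ⟨i, hi.trans n.lt_succ_self, hfirst⟩

theorem lexLe_and_forall_ge_iff_forall_eq {n : ℕ} :
    (lexLe n x y ∧ ∀ j < n, y j ≤ x j) ↔ ∀ j < n, x j = y j := by
  refine ⟨?_, fun heq => ⟨Or.inl heq, fun j hj => (heq j hj).ge⟩⟩
  rintro ⟨heq | ⟨i, hi, -, hx, hy⟩, hge⟩
  · exact heq
  · exact absurd (hge i hi) (by simp [hx, hy])

theorem lexA_eq_true_iff_forall_ge (k : ℕ) : lexA x y k = true ↔ ∀ j < k + 1, y j ≤ x j := by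
  induction k with
  | zero =>
    rw [lexA, not_or_eq_true_iff_le]
    simp
  | succ k ih =>
    rw [lexA, Bool.and_eq_true, ih, not_or_eq_true_iff_le, Nat.forall_lt_succ_right (n := k + 1)]

theorem lexD_succ_eq_true_iff (k : ℕ) :
    lexD x y (k + 1) = true ↔
      lexD x y k = true ∧ (lexA x y k = true → x (k + 1) ≤ y (k + 1)) := by
  rw [lexD, Bool.and_eq_true, not_or_eq_true_iff_le, Bool.le_iff_imp, not_or_eq_true_iff_le]

theorem lexD_eq_true_iff_lexLe (k : ℕ) : lexD x y k = true ↔ lexLe (k + 1) x y := by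
  induction k with
  | zero =>
    rw [lexD, not_or_eq_true_iff_le]
    simp [lexLe_succ_iff, lexLe_zero]
  | succ k ih =>
    rw [lexD_succ_eq_true_iff, lexLe_succ_iff (n := k + 1), ih, lexA_eq_true_iff_forall_ge]
    refine and_congr_right fun hle => imp_congr_left ?_
    rw [← lexLe_and_forall_ge_iff_forall_eq, and_iff_right hle]

theorem lexD_and_lexA_eq_true_iff_forall_eq (k : ℕ) :
    (lexD x y k = true ∧ lexA x y k = true) ↔ ∀ j < k + 1, x j = y j := by
  rw [lexD_eq_true_iff_lexLe, lexA_eq_true_iff_forall_ge, lexLe_and_forall_ge_iff_forall_eq]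

end

/-- For `1 ≤ i ≤ n`, the circuit bit `d_i` is `1` iff
`(x_1, …, x_i) ≤lex (y_1, …, y_i)`; and for `1 ≤ i ≤ n−1`, `d_i = 1` and
`a_i = 1` hold simultaneously iff `(x_1, …, x_i) = (y_1, …, y_i)`. -/
theorem circuit_prefix_invariants (n : ℕ) (x y : ℕ → Bool) :
    (∀ i, 1 ≤ i → i ≤ n → (lexD x y (i - 1) = true ↔ lexLe i x y)) ∧
    (∀ i, 1 ≤ i → i ≤ n - 1 →
      ((lexD x y (i - 1) = true ∧ lexA x y (i - 1) = true) ↔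
        ∀ j < i, x j = y j)) := by
  constructor
  · intro i hi _
    rw [lexD_eq_true_iff_lexLe, Nat.sub_add_cancel hi]
  · intro i hi _
    rw [lexD_and_lexA_eq_true_iff_forall_eq, Nat.sub_add_cancel hi]
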